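/- There is a constant C > 0 such that for every n ≥ 2 there exists a nonempty set S of triangulations of the convex (n+2)-gon with 2|S| ≤ |V(K_n)| for which the number of edges of the associahedron graph K_n with exactly one endpoint in S is at most C·|S|/√n. In other words, the edge expansion of K_n is O(1/√n). -/

import Mathlib

open Finset

/-- `x` lies strictly between `a` and `b` in cyclic (counterclockwise) order
on the vertices `0, 1, …, m-1` of a convex `m`-gon. -/
def CycBtw {m : ℕ} (a b x : Fin m) : Prop :=
  0 < (x - a).val ∧ (x - a).val < (b - a).val

/-- `a` and `b` are adjacent (cyclically consecutive) vertices of the convex `m`-gon. -/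
def PolyAdj {m : ℕ} (a b : Fin m) : Prop :=
  (b - a).val = 1 ∨ (a - b).val = 1

/-- `e` is a side of the convex `m`-gon. -/
def IsSide {m : ℕ} (e : Sym2 (Fin m)) : Prop :=
  ∃ a b : Fin m, e = s(a, b) ∧ PolyAdj a b

/-- `e` is a diagonal of the convex `m`-gon: a pair of distinct non-adjacent vertices. -/
def IsDiagonal {m : ℕ} (e : Sym2 (Fin m)) : Prop :=
  ¬ e.IsDiag ∧ ∀ a b : Fin m, e = s(a, b) → ¬ PolyAdj a b

/-- Two chords cross iff exactly one endpoint of one lies strictly between the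
endpoints of the other (for every representation of the endpoints). -/
def Crosses {m : ℕ} (e f : Sym2 (Fin m)) : Prop :=
  ∀ a b : Fin m, e = s(a, b) →
    ∃ c d : Fin m, f = s(c, d) ∧ Xor' (CycBtw a b c) (CycBtw a b d)

/-- A triangulation of the convex `(n+2)`-gon: a maximal set of pairwise
non-crossing diagonals. -/
def IsTriangulation (n : ℕ) (t : Finset (Sym2 (Fin (n + 2)))) : Prop :=
  (∀ e ∈ t, IsDiagonal e) ∧
  (∀ e ∈ t, ∀ f ∈ t, ¬ Crosses e f) ∧
  (∀ e, IsDiagonal e → (∀ f ∈ t, ¬ Crosses e f) → e ∈ t)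

/-- The type of triangulations of the convex `(n+2)`-gon. -/
def Triangulation (n : ℕ) : Type :=
  {t : Finset (Sym2 (Fin (n + 2))) // IsTriangulation n t}

instance (n : ℕ) : DecidableEq (Triangulation n) := fun a b =>
  decidable_of_iff (a.val = b.val) Subtype.ext_iff.symm

noncomputable instance (n : ℕ) : Fintype (Triangulation n) := by
  classical exact Subtype.fintype _

/-- The associahedron graph `K_n`: vertices are the triangulations of the convex
`(n+2)`-gon, with an edge between two triangulations iff they differ in exactly
one diagonal (a flip). -/
def assocGraph (n : ℕ) : SimpleGraph (Triangulation n) where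
  Adj s t := (s.val \ t.val).card = 1 ∧ (t.val \ s.val).card = 1
  symm := ⟨fun s t h => ⟨h.2, h.1⟩⟩
  loopless := ⟨fun s h => by simp at h⟩

/-- The set of edges of `G` with exactly one endpoint in `S`. -/
def edgeBoundary {V : Type*} (G : SimpleGraph V) (S : Set V) : Set (Sym2 V) :=
  {e | e ∈ G.edgeSet ∧ ∃ u v : V, e = s(u, v) ∧ u ∈ S ∧ v ∉ S}

namespace AssocExp

section generic
variable {α : Type*} [LinearOrder α]

/-- linear crossing of chords -/
def Cr (e f : α × α) : Prop :=
  (e.1 < f.1 ∧ f.1 < e.2 ∧ e.2 < f.2) ∨ (f.1 < e.1 ∧ e.1 < f.2 ∧ f.2 < e.2)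

lemma Cr.symm {e f : α × α} (h : Cr e f) : Cr f e := by
  unfold Cr at *; tauto

def prs (V : Finset α) : Finset (α × α) := (V ×ˢ V).filter (fun e => e.1 < e.2)

lemma mem_prs {V : Finset α} {e : α × α} : e ∈ prs V ↔ e.1 ∈ V ∧ e.2 ∈ V ∧ e.1 < e.2 := by
  simp [prs, and_assoc]

def IsTri (V : Finset α) (T : Finset (α × α)) : Prop :=
  T ⊆ prs V ∧ (∀ e ∈ T, ∀ f ∈ T, ¬ Cr e f) ∧ ∀ e ∈ prs V, (∀ f ∈ T, ¬ Cr e f) → e ∈ T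

open Classical in
noncomputable def Tri (V : Finset α) : Finset (Finset (α × α)) :=
  (prs V).powerset.filter (IsTri V)

lemma mem_Tri {V : Finset α} {T : Finset (α × α)} : T ∈ Tri V ↔ IsTri V T := by
  simp only [Tri, Finset.mem_filter, Finset.mem_powerset]
  exact ⟨fun h => h.2, fun h => ⟨h.1, h⟩⟩

open Classical in
noncomputable def cnt (V : Finset α) (A : Finset (α × α)) : ℕ :=
  ((Tri V).filter (fun T => A ⊆ T)).card

def inn (V : Finset α) (a b : α) : Finset α := V.filter (fun x => a ≤ x ∧ x ≤ b)
def out (V : Finset α) (a b : α) : Finset α := V.filter (fun x => x ≤ a ∨ b ≤ x)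

lemma mem_inn {V : Finset α} {a b x : α} : x ∈ inn V a b ↔ x ∈ V ∧ a ≤ x ∧ x ≤ b := by
  simp [inn]
lemma mem_out {V : Finset α} {a b x : α} : x ∈ out V a b ↔ x ∈ V ∧ (x ≤ a ∨ b ≤ x) := by
  simp [out]

lemma inn_out_ncr {V : Finset α} {a b : α} {e f : α × α}
    (he : e ∈ prs (inn V a b)) (hf : f ∈ prs (out V a b)) : ¬ Cr e f := by
  rw [mem_prs, mem_inn, mem_inn] at he
  rw [mem_prs, mem_out, mem_out] at hf
  unfold Cr
  grind

lemma prs_inn_sub {V : Finset α} {a b : α} : prs (inn V a b) ⊆ prs V := by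
  intro e; simp only [mem_prs, mem_inn]; tauto
lemma prs_out_sub {V : Finset α} {a b : α} : prs (out V a b) ⊆ prs V := by
  intro e; simp only [mem_prs, mem_out]; tauto

lemma inn_or_out {V : Finset α} {a b : α} {e : α × α}
    (he : e ∈ prs V) (h : ¬ Cr e (a, b)) : e ∈ prs (inn V a b) ∨ e ∈ prs (out V a b) := by
  simp only [mem_prs, mem_inn, mem_out] at *
  unfold Cr at h
  grind

lemma inn_and_out {V : Finset α} {a b : α} {e : α × α} (hab : a < b)
    (h1 : e ∈ prs (inn V a b)) (h2 : e ∈ prs (out V a b)) : e = (a, b) := by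
  obtain ⟨x, y⟩ := e
  simp only [mem_prs, mem_inn, mem_out, Prod.mk.injEq] at *
  grind

lemma mem_of_inn {V : Finset α} {a b : α} {T : Finset (α × α)} (ha : a ∈ V) (hb : b ∈ V)
    (hab : a < b) (hT : IsTri (inn V a b) T) : (a, b) ∈ T := by
  have h0 : (a, b) ∈ prs (inn V a b) := by
    simp only [mem_prs, mem_inn]; simp [ha, hb, hab, hab.le]
  have h1 : (a, b) ∈ prs (out V a b) := by
    simp only [mem_prs, mem_out]; simp [ha, hb, hab, hab.le]
  exact hT.2.2 _ h0 fun f hf hc => inn_out_ncr (hT.1 hf) h1 hc.symm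

lemma mem_of_out {V : Finset α} {a b : α} {T : Finset (α × α)} (ha : a ∈ V) (hb : b ∈ V)
    (hab : a < b) (hT : IsTri (out V a b) T) : (a, b) ∈ T := by
  have h0 : (a, b) ∈ prs (inn V a b) := by
    simp only [mem_prs, mem_inn]; simp [ha, hb, hab, hab.le]
  have h1 : (a, b) ∈ prs (out V a b) := by
    simp only [mem_prs, mem_out]; simp [ha, hb, hab, hab.le]
  exact hT.2.2 _ h1 fun f hf hc => inn_out_ncr h0 (hT.1 hf) hc

lemma cnt_split {V : Finset α} {a b : α} (ha : a ∈ V) (hb : b ∈ V) (hab : a < b)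
    {A A1 A2 : Finset (α × α)} (h1 : A1 ⊆ prs (inn V a b)) (h2 : A2 ⊆ prs (out V a b))
    (hA : A = insert (a, b) (A1 ∪ A2)) :
    cnt V A = cnt (inn V a b) A1 * cnt (out V a b) A2 := by
  classical
  unfold cnt
  rw [← Finset.card_product]
  refine Finset.card_bij' (fun T _ => (T ∩ prs (inn V a b), T ∩ prs (out V a b)))
    (fun p _ => p.1 ∪ p.2) ?_ ?_ ?_ ?_
  · intro T hT
    simp only [Finset.mem_filter, Finset.mem_product, mem_Tri] at hT ⊢
    obtain ⟨⟨hs, hn, hm⟩, hAT⟩ := hT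
    have habT : (a, b) ∈ T := hAT (by simp [hA])
    refine ⟨⟨⟨Finset.inter_subset_right, ?_, ?_⟩, ?_⟩, ⟨⟨Finset.inter_subset_right, ?_, ?_⟩, ?_⟩⟩
    · intro e he f hf
      exact hn e (Finset.mem_inter.1 he).1 f (Finset.mem_inter.1 hf).1
    · intro e he hf
      refine Finset.mem_inter.2 ⟨hm e (prs_inn_sub he) ?_, he⟩
      intro f hfT hc
      rcases inn_or_out (hs hfT) (hn f hfT _ habT) with h | h
      · exact hf f (Finset.mem_inter.2 ⟨hfT, h⟩) hc
      · exact inn_out_ncr he h hc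
    · exact Finset.subset_inter (fun x hx => hAT (by simp [hA, hx])) h1
    · intro e he f hf
      exact hn e (Finset.mem_inter.1 he).1 f (Finset.mem_inter.1 hf).1
    · intro e he hf
      refine Finset.mem_inter.2 ⟨hm e (prs_out_sub he) ?_, he⟩
      intro f hfT hc
      rcases inn_or_out (hs hfT) (hn f hfT _ habT) with h | h
      · exact inn_out_ncr h he hc.symm
      · exact hf f (Finset.mem_inter.2 ⟨hfT, h⟩) hc
    · exact Finset.subset_inter (fun x hx => hAT (by simp [hA, hx])) h2
  · rintro ⟨T1, T2⟩ hT
    simp only [Finset.mem_filter, Finset.mem_product, mem_Tri] at hT ⊢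
    obtain ⟨⟨hT1, hA1⟩, ⟨hT2, hA2⟩⟩ := hT
    have habT := mem_of_inn ha hb hab hT1
    refine ⟨⟨?_, ?_, ?_⟩, ?_⟩
    · exact Finset.union_subset (hT1.1.trans prs_inn_sub) (hT2.1.trans prs_out_sub)
    · intro e he f hf hc
      rcases Finset.mem_union.1 he with he | he <;> rcases Finset.mem_union.1 hf with hf | hf
      · exact hT1.2.1 e he f hf hc
      · exact inn_out_ncr (hT1.1 he) (hT2.1 hf) hc
      · exact inn_out_ncr (hT1.1 hf) (hT2.1 he) hc.symm
      · exact hT2.2.1 e he f hf hc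
    · intro e he hf
      rcases inn_or_out he (hf _ (Finset.mem_union_left _ habT)) with h | h
      · exact Finset.mem_union_left _ (hT1.2.2 e h fun f hf' => hf f (Finset.mem_union_left _ hf'))
      · exact Finset.mem_union_right _ (hT2.2.2 e h fun f hf' => hf f (Finset.mem_union_right _ hf'))
    · rw [hA]
      refine Finset.insert_subset (Finset.mem_union_left _ habT) ?_
      exact Finset.union_subset_union hA1 hA2
  · intro T hT
    simp only [Finset.mem_filter, mem_Tri] at hT
    obtain ⟨⟨hs, hn, hm⟩, hAT⟩ := hT
    have habT : (a, b) ∈ T := hAT (by simp [hA])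
    ext e
    simp only [Finset.mem_union, Finset.mem_inter]
    constructor
    · tauto
    · intro he
      rcases inn_or_out (hs he) (hn e he _ habT) with h | h <;> tauto
  · rintro ⟨T1, T2⟩ hT
    simp only [Finset.mem_filter, Finset.mem_product, mem_Tri] at hT ⊢
    obtain ⟨⟨hT1, hA1⟩, ⟨hT2, hA2⟩⟩ := hT
    have k1 := mem_of_inn ha hb hab hT1
    have k2 := mem_of_out ha hb hab hT2
    refine Prod.ext ?_ ?_
    · ext e
      simp only [Finset.mem_union, Finset.mem_inter]
      constructor
      · rintro ⟨h | h, h'⟩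
        · exact h
        · rw [inn_and_out hab h' (hT2.1 h)]; exact k1
      · intro h; exact ⟨Or.inl h, hT1.1 h⟩
    · ext e
      simp only [Finset.mem_union, Finset.mem_inter]
      constructor
      · rintro ⟨h | h, h'⟩
        · rw [inn_and_out hab (hT1.1 h) h']; exact k2
        · exact h
      · intro h; exact ⟨Or.inr h, hT2.1 h⟩

/-- chords not crossed by anything are in T; consecutive vertices -/
lemma side_mem {V : Finset α} {T : Finset (α × α)} (hT : IsTri V T) {a b : α} (ha : a ∈ V)
    (hb : b ∈ V) (hab : a < b) (h : ∀ x ∈ V, ¬ (a < x ∧ x < b)) : (a, b) ∈ T := by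
  refine hT.2.2 _ (by simp [mem_prs, ha, hb, hab]) ?_
  intro f hf hc
  have := hT.1 hf
  rw [mem_prs] at this
  have h1 := h _ this.1
  have h2 := h _ this.2.1
  unfold Cr at hc
  grind

/-- Inner apex -/
lemma apex {V : Finset α} {T : Finset (α × α)} (hT : IsTri V T) {a b : α} (hab : (a, b) ∈ T)
    (h : ∃ x ∈ V, a < x ∧ x < b) : ∃ k ∈ V, a < k ∧ k < b ∧ (a, k) ∈ T ∧ (k, b) ∈ T := by
  classical
  have habV := mem_prs.1 (hT.1 hab)
  simp only at habV
  have hne : (V.filter (fun k => a < k ∧ k < b)).Nonempty := by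
    obtain ⟨x, hx⟩ := h; exact ⟨x, by simpa using hx⟩
  -- the next vertex after a
  have hn := Finset.min'_mem _ hne
  have hmin := Finset.min'_le (V.filter (fun k => a < k ∧ k < b))
  set c := (V.filter (fun k => a < k ∧ k < b)).min' hne with hc
  simp only [Finset.mem_filter] at hn hmin
  have hacT : (a, c) ∈ T := by
    refine side_mem hT habV.1 hn.1 hn.2.1 ?_
    intro x hx hx'
    have := hmin x ⟨hx, hx'.1, hx'.2.trans hn.2.2⟩
    exact absurd this (not_le.2 hx'.2)
  have hne2 : (V.filter (fun k => a < k ∧ k < b ∧ (a, k) ∈ T)).Nonempty :=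
    ⟨c, by simp [hn, hacT]⟩
  have hk := Finset.max'_mem _ hne2
  have hmax := Finset.le_max' (V.filter (fun k => a < k ∧ k < b ∧ (a, k) ∈ T))
  set k := (V.filter (fun k => a < k ∧ k < b ∧ (a, k) ∈ T)).max' hne2 with hkdef
  simp only [Finset.mem_filter] at hk hmax
  refine ⟨k, hk.1, hk.2.1, hk.2.2.1, hk.2.2.2, ?_⟩
  refine hT.2.2 _ (by simp [mem_prs, habV, hk]) ?_
  rintro ⟨x, y⟩ hf hcr
  have hfV := mem_prs.1 (hT.1 hf)
  have n1 := hT.2.1 _ hf _ hab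
  have n2 := hT.2.1 _ hf _ hk.2.2.2
  have hm := hmax y
  unfold Cr at *
  simp only at *
  by_cases hxa : x = a
  · subst hxa
    have : ¬ (k < y ∧ y < b) := fun h => absurd (hm ⟨hfV.2.1, hk.2.1.trans h.1, h.2, hf⟩) (not_le.2 h.1)
    grind
  · grind

/-- outer apex -/
lemma outer_apex {V : Finset α} {T : Finset (α × α)} (hT : IsTri V T) {i j : α} (hij : (i, j) ∈ T)
    {lo hi : α} (hlo : lo ∈ V) (hhi : hi ∈ V) (hV : ∀ x ∈ V, lo ≤ x ∧ x ≤ hi)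
    (hne : (i, j) ≠ (lo, hi)) :
    ∃ q ∈ V, (q < i ∧ (q, i) ∈ T ∧ (q, j) ∈ T) ∨ (j < q ∧ (j, q) ∈ T ∧ (i, q) ∈ T) := by
  classical
  have hijV := mem_prs.1 (hT.1 hij)
  simp only at hijV
  have hlh : lo < hi := lt_of_le_of_lt (hV _ hijV.1).1 (lt_of_lt_of_le hijV.2.2 (hV _ hijV.2.1).2)
  have hroot : (lo, hi) ∈ T := by
    refine hT.2.2 _ (by simp [mem_prs, hlo, hhi, hlh]) ?_
    intro f hf hc
    have := mem_prs.1 (hT.1 hf)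
    have h1 := hV _ this.1
    have h2 := hV _ this.2.1
    unfold Cr at hc
    grind
  have hex : (T.filter (fun e => e.1 ≤ i ∧ j ≤ e.2 ∧ e ≠ (i, j))).Nonempty :=
    ⟨(lo, hi), by simp only [Finset.mem_filter]; exact ⟨hroot, (hV _ hijV.1).1, (hV _ hijV.2.1).2, hne.symm⟩⟩
  obtain ⟨⟨x, y⟩, hxy, hmin⟩ := Finset.exists_min_image _ (fun e => (inn V e.1 e.2).card) hex
  simp only [Finset.mem_filter] at hxy hmin
  obtain ⟨hxyT, hxi, hjy, hne'⟩ := hxy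
  have hxyV := mem_prs.1 (hT.1 hxyT)
  simp only at hxyV
  have hap : ∃ k ∈ V, x < k ∧ k < y := by
    by_cases h : x = i
    · refine ⟨j, hijV.2.1, by grind, ?_⟩
      rcases hjy.lt_or_eq with h' | h'
      · exact h'
      · exact absurd (by rw [h, h']) hne'
    · exact ⟨i, hijV.1, by grind, by grind⟩
  obtain ⟨k, hkV, hxk, hky, hxkT, hkyT⟩ := apex hT hxyT hap
  have c1 := hT.2.1 _ hxkT _ hij
  have c2 := hT.2.1 _ hkyT _ hij
  have hcard : ∀ x' y' : α, x' ∈ V → y' ∈ V → x ≤ x' → y' ≤ y → (x < x' ∨ y' < y) →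
      (inn V x' y').card < (inn V x y).card := by
    intro x' y' hx' hy' h1 h2 h3
    apply Finset.card_lt_card
    rw [Finset.ssubset_iff_of_subset]
    · rcases h3 with h | h
      · exact ⟨x, by simp [mem_inn, hxyV, hxyV.2.2.le], by simp [mem_inn, h]⟩
      · exact ⟨y, by simp [mem_inn, hxyV, hxyV.2.2.le], by simp [mem_inn, h]⟩
    · intro z; simp only [mem_inn]; grind
  rcases le_or_gt j k with hjk | hkj
  · -- (x,k) contains (i,j)
    have : (x, k) = (i, j) := by
      by_contra hh
      have := hmin (x, k) ⟨hxkT, hxi, hjk, hh⟩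
      exact absurd this (not_le.2 (hcard x k hxyV.1 hkV le_rfl hky.le (Or.inr hky)))
    simp only [Prod.mk.injEq] at this
    obtain ⟨rfl, rfl⟩ := this
    exact ⟨y, hxyV.2.1, Or.inr ⟨hky, hkyT, hxyT⟩⟩
  · rcases le_or_gt k i with hki | hik
    · have : (k, y) = (i, j) := by
        by_contra hh
        have := hmin (k, y) ⟨hkyT, hki, hjy, hh⟩
        exact absurd this (not_le.2 (hcard k y hkV hxyV.2.1 hxk.le le_rfl (Or.inl hxk)))
      simp only [Prod.mk.injEq] at this
      obtain ⟨rfl, rfl⟩ := this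
      exact ⟨x, hxyV.1, Or.inl ⟨hxk, hxkT, hxyT⟩⟩
    · exfalso
      unfold Cr at c1 c2
      simp only at c1 c2
      apply hne'
      grind

end generic

end AssocExp

namespace AssocExp

section generic2
variable {α : Type*} [LinearOrder α]

lemma cnt_trivial {V : Finset α} (h : ∀ e ∈ prs V, ∀ f ∈ prs V, ¬ Cr e f) : cnt V ∅ = 1 := by
  classical
  unfold cnt
  rw [Finset.card_eq_one]
  refine ⟨prs V, ?_⟩
  ext T
  simp only [Finset.mem_filter, mem_Tri, Finset.mem_singleton, Finset.empty_subset, and_true]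
  constructor
  · intro hT
    exact Finset.Subset.antisymm hT.1 fun e he => hT.2.2 e he fun f hf => h e he f (hT.1 hf)
  · rintro rfl
    exact ⟨Finset.Subset.refl _, h, fun e he _ => he⟩

lemma cnt_three {x y z : α} : cnt ({x, y, z} : Finset α) ∅ = 1 := by
  apply cnt_trivial
  intro e he f hf hc
  simp only [mem_prs, Finset.mem_insert, Finset.mem_singleton] at he hf
  unfold Cr at hc
  grind

lemma cnt_root {V : Finset α} {x y z : α} (hx : x ∈ V) (hy : y ∈ V) (hz : z ∈ V) (hxy : x < y)
    (hyz : y < z) (hV : ∀ v ∈ V, x ≤ v ∧ v ≤ z) :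
    cnt V {(x, y), (y, z)} = cnt (inn V x y) ∅ * cnt (inn V y z) ∅ := by
  have hy' : y ∈ out V x y := by simp [mem_out, hy]
  have hz' : z ∈ out V x y := by simp [mem_out, hz, hyz.le]
  rw [cnt_split hx hy hxy (A1 := ∅) (A2 := {(y, z)}) (by simp)
    (by simp [mem_prs, hyz, hy', hz']) (by simp)]
  rw [cnt_split hy' hz' hyz (A1 := ∅) (A2 := ∅) (by simp) (by simp) (by simp)]
  have e1 : inn (out V x y) y z = inn V y z := by
    ext v; simp only [mem_inn, mem_out]; tauto
  have e2 : out (out V x y) y z = {x, y, z} := by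
    ext v; simp only [mem_out, Finset.mem_insert, Finset.mem_singleton]
    constructor
    · rintro ⟨⟨h1, h2⟩, h3⟩
      have := hV v h1
      grind
    · have := hxy.trans hyz
      rintro (rfl | rfl | rfl) <;> simp [*, le_of_lt]
  rw [e1, e2, cnt_three, mul_one]

theorem cnt_catalan : ∀ (N : ℕ) (V : Finset α), V.card = N + 2 → cnt V ∅ = catalan N := by
  classical
  intro N
  induction N using Nat.strong_induction_on with
  | _ N ih =>
  intro V hVc
  have hne : V.Nonempty := by rw [← Finset.card_pos]; omega
  obtain ⟨lo, hlo, hlo'⟩ := V.exists_min_image id hne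
  obtain ⟨hi, hhi, hhi'⟩ := V.exists_max_image id hne
  simp only [id] at hlo' hhi'
  have hlh : lo < hi := by
    rcases (hlo' hi hhi).lt_or_eq with h | h
    · exact h
    · exfalso
      have : V ⊆ {lo} := fun v hv => by
        have h1 := hlo' v hv
        have h2 := hhi' v hv
        simp only [Finset.mem_singleton]; exact le_antisymm (h ▸ h2) h1
      have := Finset.card_le_card this
      simp at this; omega
  set W := V.filter (fun k => lo < k ∧ k < hi) with hW
  have hVW : V = insert lo (insert hi W) := by
    ext v
    simp only [hW, Finset.mem_insert, Finset.mem_filter]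
    constructor
    · intro hv
      have h1 := hlo' v hv
      have h2 := hhi' v hv
      grind
    · rintro (rfl | rfl | h)
      · exact hlo
      · exact hhi
      · exact h.1
  have hWc : W.card = N := by
    have : V.card = W.card + 2 := by
      conv_lhs => rw [hVW]
      rw [Finset.card_insert_of_notMem, Finset.card_insert_of_notMem]
      · simp [hW]
      · simp [hW, hlh.ne]
    omega
  rcases N with _ | N
  · rw [catalan_zero]
    apply cnt_trivial
    intro e he f hf hc
    rw [Finset.card_eq_zero] at hWc
    rw [hVW, hWc] at he hf
    simp only [mem_prs, Finset.mem_insert, Finset.mem_singleton] at he hf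
    unfold Cr at hc
    grind
  have hroot : ∀ T, IsTri V T → (lo, hi) ∈ T := by
    intro T hT
    refine hT.2.2 _ (by simp [mem_prs, hlo, hhi, hlh]) ?_
    intro f hf hc
    have := mem_prs.1 (hT.1 hf)
    have h1 := hlo' _ this.1
    have h2 := hhi' _ this.2.1
    unfold Cr at hc
    grind
  have hdec : cnt V ∅ = ∑ k ∈ W, cnt V {(lo, k), (k, hi)} := by
    unfold cnt
    rw [← Finset.card_biUnion]
    · congr 1
      ext T
      simp only [Finset.mem_filter, Finset.empty_subset, and_true, Finset.mem_biUnion, mem_Tri]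
      constructor
      · intro hT
        have hWne : W.Nonempty := by rw [← Finset.card_pos]; omega
        obtain ⟨w, hw⟩ := hWne
        rw [hW, Finset.mem_filter] at hw
        obtain ⟨k, h1, h2, h3, h4, h5⟩ := apex hT (hroot T hT) ⟨w, hw.1, hw.2⟩
        refine ⟨k, by simp [hW, h1, h2, h3], hT, ?_⟩
        simp [Finset.insert_subset_iff, h4, h5]
      · rintro ⟨k, -, h, -⟩; exact h
    · intro k hk k' hk' hkk
      rw [Function.onFun, Finset.disjoint_left]
      intro T h1 h2
      simp only [Finset.mem_filter, mem_Tri, Finset.insert_subset_iff, Finset.singleton_subset_iff] at h1 h2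
      simp only [hW, Finset.coe_filter, Set.mem_ofPred_eq] at hk hk'
      have a1 := h1.1.2.1 _ h1.2.1 _ h2.2.2
      have a2 := h1.1.2.1 _ h1.2.2 _ h2.2.1
      unfold Cr at a1 a2
      simp only at a1 a2
      grind
  rw [hdec, catalan_succ']
  -- positions
  let L : α → ℕ := fun k => (W.filter (fun w => w < k)).card
  let R : α → ℕ := fun k => (W.filter (fun w => k < w)).card
  have hLR : ∀ k ∈ W, L k + R k = N := by
    intro k hk
    have h1 := Finset.card_filter_add_card_filter_not (s := W) (fun w => w < k)
    have h2 : W.filter (fun w => ¬ w < k) = insert k (W.filter (fun w => k < w)) := by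
      ext w; simp only [Finset.mem_filter, Finset.mem_insert]
      constructor
      · rintro ⟨h, h'⟩
        rcases (not_lt.1 h').lt_or_eq with h'' | h''
        · exact Or.inr ⟨h, h''⟩
        · exact Or.inl h''.symm
      · rintro (rfl | ⟨h, h'⟩)
        · exact ⟨hk, lt_irrefl _⟩
        · exact ⟨h, not_lt.2 h'.le⟩
    rw [h2, Finset.card_insert_of_notMem (by simp)] at h1
    simp only [L, R]; omega
  have hLmono : ∀ k ∈ W, ∀ k' ∈ W, k < k' → L k < L k' := by
    intro k hk k' hk' h
    apply Finset.card_lt_card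
    rw [Finset.ssubset_iff_of_subset]
    · exact ⟨k, by simp [hk, h], by simp⟩
    · intro w; simp only [Finset.mem_filter]; exact fun h' => ⟨h'.1, h'.2.trans h⟩
  have hinj : Set.InjOn (fun k => (L k, R k)) (W : Set α) := by
    intro k hk k' hk' h
    simp only [Prod.mk.injEq] at h
    rcases lt_trichotomy k k' with h' | h' | h'
    · have := hLmono k hk k' hk' h'; omega
    · exact h'
    · have := hLmono k' hk' k hk h'; omega
  have himg : W.image (fun k => (L k, R k)) = Finset.HasAntidiagonal.antidiagonal N := by
    apply Finset.eq_of_subset_of_card_le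
    · intro p hp
      simp only [Finset.mem_image] at hp
      obtain ⟨k, hk, rfl⟩ := hp
      simpa using hLR k hk
    · rw [Finset.card_image_of_injOn hinj, hWc]; simp
  rw [← himg, Finset.sum_image hinj]
  refine Finset.sum_congr rfl fun k hk => ?_
  have hk' := hk
  rw [hW, Finset.mem_filter] at hk'
  rw [cnt_root hlo hk'.1 hhi hk'.2.1 hk'.2.2 (fun v hv => ⟨hlo' v hv, hhi' v hv⟩)]
  have hlr := hLR k hk
  congr 1
  · apply ih _ (by omega)
    have : inn V lo k = insert lo (insert k (W.filter (fun w => w < k))) := by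
      ext v
      simp only [mem_inn, Finset.mem_insert, Finset.mem_filter, hW]
      have := hlo' v
      have := hhi' v
      grind
    rw [this, Finset.card_insert_of_notMem, Finset.card_insert_of_notMem]
    · simp
    · simp [hW, hk'.2.1.ne]
  · apply ih _ (by omega)
    have : inn V k hi = insert hi (insert k (W.filter (fun w => k < w))) := by
      ext v
      simp only [mem_inn, Finset.mem_insert, Finset.mem_filter, hW]
      have := hlo' v
      have := hhi' v
      grind
    rw [this, Finset.card_insert_of_notMem, Finset.card_insert_of_notMem]
    · simp
    · simp [hW, hk'.2.2.ne']

/-- number of triangulations with a prescribed triangle -/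
lemma cnt_triangle {V : Finset α} {x y z : α} (hx : x ∈ V) (hy : y ∈ V) (hz : z ∈ V) (hxy : x < y)
    (hyz : y < z) :
    cnt V {(x, z), (x, y), (y, z)} =
      cnt (inn V x y) ∅ * cnt (inn V y z) ∅ * cnt (out V x z) ∅ := by
  have hxz := hxy.trans hyz
  rw [cnt_split hx hz hxz (A1 := {(x, y), (y, z)}) (A2 := ∅) ?_ (by simp) (by simp)]
  · rw [cnt_root (by simp [mem_inn, hx, hxz.le]) (by simp [mem_inn, hy, hxy.le, hyz.le])
      (by simp [mem_inn, hz, hxz.le]) hxy hyz (by intro v; rw [mem_inn]; tauto)]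
    congr 3
    · ext v; simp only [mem_inn]; grind
    · ext v; simp only [mem_inn]; grind
  · simp [Finset.insert_subset_iff, mem_prs, mem_inn, hx, hy, hz, hxy, hyz, hxy.le, hyz.le, hxz.le]

/-- number of triangulations with a prescribed quadrilateral and diagonal `i j` -/
lemma cnt_quad {V : Finset α} {i p j q : α} (hi : i ∈ V) (hp : p ∈ V) (hj : j ∈ V) (hq : q ∈ V)
    (hip : i < p) (hpj : p < j) (hjq : j < q) :
    cnt V {(i, q), (i, j), (j, q), (i, p), (p, j)} =
      (cnt (inn V i p) ∅ * cnt (inn V p j) ∅) * cnt (inn V j q) ∅ * cnt (out V i q) ∅ := by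
  have hij := hip.trans hpj
  have hiq := hij.trans hjq
  have hpq := hpj.trans hjq
  rw [cnt_split hi hq hiq (A1 := {(i, j), (j, q), (i, p), (p, j)}) (A2 := ∅) ?_ (by simp) (by simp)]
  · congr 1
    have a1 : i ∈ inn V i q := by simp [mem_inn, hi, hiq.le]
    have a2 : j ∈ inn V i q := by simp [mem_inn, hj, hij.le, hjq.le]
    have a3 : q ∈ inn V i q := by simp [mem_inn, hq, hiq.le]
    have a4 : p ∈ inn V i q := by simp [mem_inn, hp, hip.le, hpq.le]
    rw [cnt_split a1 a2 hij (A1 := {(i, p), (p, j)}) (A2 := {(j, q)}) ?_ ?_ ?_]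
    · have b2 : j ∈ out (inn V i q) i j := by simp [mem_out, a2]
      have b3 : q ∈ out (inn V i q) i j := by simp [mem_out, a3, hjq.le]
      rw [cnt_split b2 b3 hjq (A1 := ∅) (A2 := ∅) (by simp) (by simp) (by simp)]
      have e2 : out (out (inn V i q) i j) j q = {i, j, q} := by
        ext v; simp only [mem_inn, mem_out, Finset.mem_insert, Finset.mem_singleton]; grind
      rw [e2, cnt_three, mul_one]
      rw [cnt_root (by simp [mem_inn, hi, hij.le, hiq.le])
        (by simp [mem_inn, hp, hip.le, hpj.le, hpq.le])
        (by simp [mem_inn, hj, hij.le, hjq.le]) hip hpj (by intro v; rw [mem_inn]; tauto)]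
      have e3 : inn (inn (inn V i q) i j) i p = inn V i p := by
        ext v; simp only [mem_inn]; grind
      have e4 : inn (inn (inn V i q) i j) p j = inn V p j := by
        ext v; simp only [mem_inn]; grind
      have e5 : inn (out (inn V i q) i j) j q = inn V j q := by
        ext v; simp only [mem_inn, mem_out]; grind
      rw [e3, e4, e5]
    · simp [Finset.insert_subset_iff, mem_prs, mem_inn, hi, hp, hj, hip, hpj, hip.le, hpj.le,
        hij.le, hiq.le, hpq.le, hjq.le]
    · simp [Finset.insert_subset_iff, mem_prs, mem_inn, mem_out, hj, hq, hjq, hjq.le, hij.le, hiq.le]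
    · ext e; simp only [Finset.mem_insert, Finset.mem_singleton, Finset.mem_union]; tauto
  · simp [Finset.insert_subset_iff, mem_prs, mem_inn, hi, hp, hj, hq, hip, hpj, hij, hjq, hip.le, hpj.le,
        hij.le, hiq.le, hpq.le, hjq.le]

end generic2
end AssocExp

namespace AssocExp

section bridge
variable {n : ℕ}

lemma sub_val_le {m : ℕ} {a b : Fin m} (h : a ≤ b) : (b - a).val = b.val - a.val :=
  Fin.sub_val_of_le h

lemma sub_val_lt {m : ℕ} {a b : Fin m} (h : b < a) : (b - a).val = m + b.val - a.val :=
  Fin.coe_sub_iff_lt.2 h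

lemma cycBtw_fwd {a b x : Fin (n + 2)} (h : a < b) : CycBtw a b x ↔ a < x ∧ x < b := by
  unfold CycBtw
  rw [sub_val_le h.le]
  rcases lt_or_ge x a with hx | hx
  · rw [sub_val_lt hx]; simp only [Fin.lt_def] at *; omega
  · rw [sub_val_le hx]; simp only [Fin.lt_def, Fin.le_def] at *; omega

lemma cycBtw_bwd {a b x : Fin (n + 2)} (h : a < b) : CycBtw b a x ↔ x < a ∨ b < x := by
  unfold CycBtw
  rw [sub_val_lt h]
  rcases lt_or_ge x b with hx | hx
  · rw [sub_val_lt hx]; simp only [Fin.lt_def] at *; omega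
  · rw [sub_val_le hx]; simp only [Fin.lt_def, Fin.le_def] at *; omega

lemma polyAdj_symm {a b : Fin (n + 2)} : PolyAdj a b ↔ PolyAdj b a := by
  unfold PolyAdj; tauto

lemma polyAdj_iff {a b : Fin (n + 2)} (h : a < b) :
    PolyAdj a b ↔ b.val = a.val + 1 ∨ (a.val = 0 ∧ b.val = n + 1) := by
  unfold PolyAdj
  rw [sub_val_le h.le, sub_val_lt h]
  simp only [Fin.lt_def] at *; omega

lemma crosses_iff {a b c d : Fin (n + 2)} (hab : a < b) (hcd : c < d) :
    Crosses s(a, b) s(c, d) ↔ Cr (a, b) (c, d) := by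
  constructor
  · intro h
    obtain ⟨c1, d1, h1, x1⟩ := h a b rfl
    obtain ⟨c2, d2, h2, x2⟩ := h b a Sym2.eq_swap
    rw [cycBtw_fwd hab, cycBtw_fwd hab] at x1
    rw [cycBtw_bwd hab, cycBtw_bwd hab] at x2
    have y1 : Xor (a < c ∧ c < b) (a < d ∧ d < b) := by
      rcases Sym2.eq_iff.1 h1 with ⟨rfl, rfl⟩ | ⟨rfl, rfl⟩
      · exact x1
      · exact x1.symm
    have y2 : Xor (c < a ∨ b < c) (d < a ∨ b < d) := by
      rcases Sym2.eq_iff.1 h2 with ⟨rfl, rfl⟩ | ⟨rfl, rfl⟩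
      · exact x2
      · exact x2.symm
    unfold Xor at y1 y2
    unfold Cr
    simp only [Fin.lt_def] at *
    omega
  · intro h x y hxy
    unfold Cr at h
    refine ⟨c, d, rfl, ?_⟩
    rcases Sym2.eq_iff.1 hxy with ⟨rfl, rfl⟩ | ⟨rfl, rfl⟩
    · rw [cycBtw_fwd hab, cycBtw_fwd hab]
      unfold Xor' Xor
      simp only [Fin.lt_def] at *
      omega
    · rw [cycBtw_bwd hab, cycBtw_bwd hab]
      unfold Xor' Xor
      simp only [Fin.lt_def] at *
      omega

lemma diag_iff {a b : Fin (n + 2)} (h : a < b) : IsDiagonal s(a, b) ↔ ¬ PolyAdj a b := by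
  unfold IsDiagonal
  constructor
  · intro h'; exact h'.2 a b rfl
  · intro h'
    refine ⟨by simpa using h.ne, ?_⟩
    intro x y hxy
    rcases Sym2.eq_iff.1 hxy with ⟨rfl, rfl⟩ | ⟨rfl, rfl⟩
    · exact h'
    · rwa [polyAdj_symm]

lemma exists_rep {s : Sym2 (Fin (n + 2))} (h : IsDiagonal s) : ∃ a b, a < b ∧ s = s(a, b) := by
  induction s using Sym2.ind with
  | _ a b =>
    have : a ≠ b := by simpa using h.1
    rcases this.lt_or_gt with h | h
    · exact ⟨a, b, h, rfl⟩
    · exact ⟨b, a, h, Sym2.eq_swap⟩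

lemma adj_ncr {a b : Fin (n + 2)} (h : a < b) (hadj : PolyAdj a b) (f : Fin (n + 2) × Fin (n + 2)) :
    ¬ Cr (a, b) f := by
  rw [polyAdj_iff h] at hadj
  have := f.1.isLt
  have := f.2.isLt
  unfold Cr
  simp only [Fin.lt_def] at *
  omega

open Classical in
noncomputable def toP (t : Finset (Sym2 (Fin (n + 2)))) : Finset (Fin (n + 2) × Fin (n + 2)) :=
  Finset.univ.filter (fun e => e.1 < e.2 ∧ (s(e.1, e.2) ∈ t ∨ PolyAdj e.1 e.2))

open Classical in
noncomputable def ofP (X : Finset (Fin (n + 2) × Fin (n + 2))) : Finset (Sym2 (Fin (n + 2))) :=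
  Finset.univ.filter (fun s => IsDiagonal s ∧ ∃ a b, a < b ∧ s = s(a, b) ∧ (a, b) ∈ X)

lemma mem_toP {t : Finset (Sym2 (Fin (n + 2)))} {a b : Fin (n + 2)} :
    (a, b) ∈ toP t ↔ a < b ∧ (s(a, b) ∈ t ∨ PolyAdj a b) := by
  simp [toP]

lemma sym2_inj {a b c d : Fin (n + 2)} (h1 : a < b) (h2 : c < d) (h : s(a, b) = s(c, d)) :
    a = c ∧ b = d := by
  rcases Sym2.eq_iff.1 h with h | ⟨rfl, rfl⟩
  · exact h
  · exact absurd h1 (not_lt.2 h2.le)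

lemma mem_ofP {X : Finset (Fin (n + 2) × Fin (n + 2))} {a b : Fin (n + 2)} (h : a < b) :
    s(a, b) ∈ ofP X ↔ ¬ PolyAdj a b ∧ (a, b) ∈ X := by
  simp only [ofP, Finset.mem_filter, Finset.mem_univ, true_and, diag_iff h]
  constructor
  · rintro ⟨h1, c, d, hcd, he, hX⟩
    obtain ⟨rfl, rfl⟩ := sym2_inj h hcd he
    exact ⟨h1, hX⟩
  · rintro ⟨h1, h2⟩; exact ⟨h1, a, b, h, rfl, h2⟩

lemma isTri_toP {t : Finset (Sym2 (Fin (n + 2)))} (ht : IsTriangulation n t) :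
    IsTri Finset.univ (toP t) := by
  obtain ⟨hd, hn, hm⟩ := ht
  refine ⟨?_, ?_, ?_⟩
  · rintro ⟨a, b⟩ h
    simpa [mem_prs] using (mem_toP.1 h).1
  · rintro ⟨a, b⟩ he ⟨c, d⟩ hf hc
    rw [mem_toP] at he hf
    rcases he with ⟨hab, he | he⟩
    · rcases hf with ⟨hcd, hf | hf⟩
      · exact hn _ he _ hf ((crosses_iff hab hcd).2 hc)
      · exact adj_ncr hcd hf _ hc.symm
    · exact adj_ncr hab he _ hc
  · rintro ⟨a, b⟩ he hf
    have hab : a < b := by simpa [mem_prs] using he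
    rw [mem_toP]
    refine ⟨hab, ?_⟩
    by_cases hadj : PolyAdj a b
    · exact Or.inr hadj
    · refine Or.inl (hm _ ((diag_iff hab).2 hadj) ?_)
      intro f hft hc
      obtain ⟨c, d, hcd, rfl⟩ := exists_rep (hd f hft)
      exact hf (c, d) (mem_toP.2 ⟨hcd, Or.inl hft⟩) ((crosses_iff hab hcd).1 hc)

lemma isTriangulation_ofP {X : Finset (Fin (n + 2) × Fin (n + 2))} (hX : IsTri Finset.univ X) :
    IsTriangulation n (ofP X) := by
  have hd : ∀ e ∈ ofP X, IsDiagonal e := by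
    intro e he; simp only [ofP, Finset.mem_filter] at he; exact he.2.1
  refine ⟨hd, ?_, ?_⟩
  · intro e he f hf hc
    obtain ⟨a, b, hab, rfl⟩ := exists_rep (hd e he)
    obtain ⟨c, d, hcd, rfl⟩ := exists_rep (hd f hf)
    exact hX.2.1 _ ((mem_ofP hab).1 he).2 _ ((mem_ofP hcd).1 hf).2 ((crosses_iff hab hcd).1 hc)
  · intro e he hf
    obtain ⟨a, b, hab, rfl⟩ := exists_rep he
    rw [diag_iff hab] at he
    refine (mem_ofP hab).2 ⟨he, hX.2.2 _ (by simpa [mem_prs] using hab) ?_⟩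
    rintro ⟨c, d⟩ hfX hc
    have hcd : c < d := by simpa [mem_prs] using hX.1 hfX
    by_cases hadj : PolyAdj c d
    · exact adj_ncr hcd hadj _ hc.symm
    · exact hf _ ((mem_ofP hcd).2 ⟨hadj, hfX⟩) ((crosses_iff hab hcd).2 hc)

lemma toP_ofP {X : Finset (Fin (n + 2) × Fin (n + 2))} (hX : IsTri Finset.univ X) :
    toP (ofP X) = X := by
  ext ⟨a, b⟩
  rw [mem_toP]
  constructor
  · rintro ⟨hab, h | h⟩
    · exact ((mem_ofP hab).1 h).2
    · exact hX.2.2 _ (by simpa [mem_prs] using hab) fun f _ => adj_ncr hab h f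
  · intro h
    have hab : a < b := by simpa [mem_prs] using hX.1 h
    refine ⟨hab, ?_⟩
    by_cases hadj : PolyAdj a b
    · exact Or.inr hadj
    · exact Or.inl ((mem_ofP hab).2 ⟨hadj, h⟩)

lemma toP_diff {s t : Finset (Sym2 (Fin (n + 2)))} (hs : IsTriangulation n s)
    (h : (s \ t).card = 1) : ∃ e, toP s \ toP t = {e} := by
  obtain ⟨x, hx⟩ := Finset.card_eq_one.1 h
  have hxs : x ∈ s \ t := by simp [hx]
  rw [Finset.mem_sdiff] at hxs
  obtain ⟨a, b, hab, rfl⟩ := exists_rep (hs.1 x hxs.1)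
  have hnadj := (diag_iff hab).1 (hs.1 _ hxs.1)
  refine ⟨(a, b), ?_⟩
  ext ⟨c, d⟩
  simp only [Finset.mem_sdiff, mem_toP, Finset.mem_singleton, Prod.mk.injEq]
  constructor
  · rintro ⟨⟨hcd, h1⟩, h2⟩
    have : s(c, d) ∈ s \ t := by rw [Finset.mem_sdiff]; tauto
    rw [hx, Finset.mem_singleton] at this
    exact sym2_inj hcd hab this
  · rintro ⟨rfl, rfl⟩
    tauto

lemma toP_inj {s t : Finset (Sym2 (Fin (n + 2)))} (hs : IsTriangulation n s)
    (ht : IsTriangulation n t) (h : toP s = toP t) : s = t := by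
  have key : ∀ s t : Finset (Sym2 (Fin (n + 2))), IsTriangulation n s → toP s = toP t → s ⊆ t := by
    intro s t hs h x hx
    obtain ⟨a, b, hab, rfl⟩ := exists_rep (hs.1 x hx)
    have := (diag_iff hab).1 (hs.1 _ hx)
    have h' : (a, b) ∈ toP t := h ▸ mem_toP.2 ⟨hab, Or.inl hx⟩
    rw [mem_toP] at h'; tauto
  exact Finset.Subset.antisymm (key s t hs h) (key t s ht h.symm)

open Classical in
lemma ncard_transfer (p : Finset (Fin (n + 2) × Fin (n + 2)) → Prop) :
    {t : Triangulation n | p (toP t.val)}.ncard = ((Tri Finset.univ).filter p).card := by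
  rw [← Set.ncard_coe_finset]
  refine Set.ncard_congr (fun t _ => toP t.val) ?_ ?_ ?_
  · intro t ht
    simp only [Finset.coe_filter, mem_Tri]
    exact ⟨isTri_toP t.2, ht⟩
  · intro s t _ _ h
    exact Subtype.ext (toP_inj s.2 t.2 h)
  · intro X hX
    simp only [Finset.coe_filter, mem_Tri] at hX
    refine ⟨⟨ofP X, isTriangulation_ofP hX.1⟩, ?_, toP_ofP hX.1⟩
    change p (toP (ofP X))
    rw [toP_ofP hX.1]; exact hX.2

/-- combinatorics of flips that destroy the last `I`-`J` chord -/
lemma flip_quad {m : ℕ} (hm : 1 ≤ m) (hmn : 4 * m ≤ n + 2)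
    {X Y : Finset (Fin (n + 2) × Fin (n + 2))} (hX : IsTri Finset.univ X) (hY : IsTri Finset.univ Y)
    {e f : Fin (n + 2) × Fin (n + 2)} (he : X \ Y = {e}) (hf : Y \ X = {f})
    (hXS : ∃ i j : Fin (n + 2), i.val < m ∧ 2 * m ≤ j.val ∧ j.val < 3 * m ∧ (i, j) ∈ X)
    (hYS : ¬ ∃ i j : Fin (n + 2), i.val < m ∧ 2 * m ≤ j.val ∧ j.val < 3 * m ∧ (i, j) ∈ Y) :
    ∃ i p j q : Fin (n + 2), i.val < m ∧ m ≤ p.val ∧ p.val < 2 * m ∧ 2 * m ≤ j.val ∧ j.val < 3 * m ∧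
      3 * m ≤ q.val ∧ ({(i, q), (i, j), (j, q), (i, p), (p, j)} : Finset _) ⊆ X ∧
      Y = insert (p, q) (X.erase (i, j)) := by
  obtain ⟨i, j, hi, hj1, hj2, hij⟩ := hXS
  push Not at hYS
  have hmem : ∀ x, x ∈ X → x ∉ Y → x = e := fun x h1 h2 => by
    have : x ∈ X \ Y := Finset.mem_sdiff.2 ⟨h1, h2⟩
    rwa [he, Finset.mem_singleton] at this
  have hmem' : ∀ x, x ∈ Y → x ∉ X → x = f := fun x h1 h2 => by
    have : x ∈ Y \ X := Finset.mem_sdiff.2 ⟨h1, h2⟩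
    rwa [hf, Finset.mem_singleton] at this
  have heX : e ∈ X ∧ e ∉ Y := by rw [← Finset.mem_sdiff, he]; simp
  have hfY : f ∈ Y ∧ f ∉ X := by rw [← Finset.mem_sdiff, hf]; simp
  have hije : (i, j) = e := hmem _ hij (hYS i j hi hj1 hj2)
  have huniq : ∀ i' j' : Fin (n + 2), i'.val < m → 2 * m ≤ j'.val → j'.val < 3 * m → (i', j') ∈ X →
      i' = i ∧ j' = j := by
    intro i' j' h1 h2 h3 h4
    have := (hmem _ h4 (hYS i' j' h1 h2 h3)).trans hije.symm
    simpa using this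
  obtain ⟨p, -, hip, hpj, hipX, hpjX⟩ := apex hX hij ⟨⟨m, by omega⟩, by simp, by
    simp only [Fin.lt_def]; omega⟩
  have hp1 : m ≤ p.val := by
    by_contra h
    have := (huniq p j (by omega) hj1 hj2 hpjX).1
    exact absurd this hip.ne'
  have hp2 : p.val < 2 * m := by
    by_contra h
    have := (huniq i p hi (by omega) (by simp only [Fin.lt_def] at hpj; omega) hipX).2
    exact absurd this hpj.ne
  obtain ⟨q, -, hq⟩ := outer_apex hX hij (lo := 0) (hi := Fin.last (n + 1)) (by simp) (by simp)
    (fun x _ => ⟨Fin.zero_le x, Fin.le_last x⟩) (by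
      intro h
      have : j = Fin.last (n + 1) := (Prod.mk.injEq _ _ _ _ ▸ h).2
      rw [this] at hj2
      simp only [Fin.val_last] at hj2
      omega)
  rcases hq with ⟨hqi, hqiX, hqjX⟩ | ⟨hjq, hjqX, hiqX⟩
  · exfalso
    have := (huniq q j (by simp only [Fin.lt_def] at hqi; omega) hj1 hj2 hqjX).1
    exact absurd this hqi.ne
  have hq3 : 3 * m ≤ q.val := by
    by_contra h
    have := (huniq i q hi (by simp only [Fin.lt_def] at hjq; omega) (by omega) hiqX).2
    exact absurd this hjq.ne'
  -- the new chord
  have hfe : Cr f e := by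
    by_contra h
    apply hfY.2
    refine hX.2.2 f (hY.1 hfY.1) ?_
    intro g hg hc
    by_cases hgY : g ∈ Y
    · exact hY.2.1 f hfY.1 g hgY hc
    · rw [hmem g hg hgY] at hc; exact h hc
  have hnc : ∀ g ∈ X, g ≠ (i, j) → ¬ Cr f g := by
    intro g hg hne
    refine hY.2.1 f hfY.1 g ?_
    by_contra hgY
    exact hne ((hmem g hg hgY).trans hije.symm)
  have n1 := hnc _ hipX (by simp [hpj.ne])
  have n2 := hnc _ hpjX (by simp [hip.ne'])
  have n3 := hnc _ hjqX (by simp [hjq.ne'])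
  have n4 := hnc _ hiqX (by simp [hjq.ne'])
  have hfpq : f = (p, q) := by
    rw [← hije] at hfe
    have hflt := (mem_prs.1 (hY.1 hfY.1)).2.2
    obtain ⟨x, y⟩ := f
    unfold Cr at *
    simp only [Prod.mk.injEq, Fin.lt_def, Fin.ext_iff] at *
    omega
  refine ⟨i, p, j, q, hi, hp1, hp2, hj1, hj2, hq3, ?_, ?_⟩
  · simp [Finset.insert_subset_iff, *]
  · ext x
    simp only [Finset.mem_insert, Finset.mem_erase]
    constructor
    · intro hx
      by_cases hxX : x ∈ X
      · refine Or.inr ⟨?_, hxX⟩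
        rintro rfl
        exact heX.2 (hije ▸ hx)
      · exact Or.inl ((hmem' x hx hxX).trans hfpq)
    · rintro (rfl | ⟨h1, h2⟩)
      · rw [← hfpq]; exact hfY.1
      · by_contra hxY
        exact h1 ((hmem x h2 hxY).trans hije.symm)

end bridge
end AssocExp

namespace AssocExp

section analysis

/-- the weight `L^(-3/2)` -/
noncomputable def g (L : ℕ) : ℝ := 1 / ((L : ℝ) * Real.sqrt L)

lemma g_nonneg (L : ℕ) : 0 ≤ g L := by unfold g; positivity

lemma cb_upper (k : ℕ) : (Nat.centralBinom k : ℝ) ^ 2 * (2 * k + 1) ≤ 16 ^ k := by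
  induction k with
  | zero => simp
  | succ k ih =>
    have h := Nat.succ_mul_centralBinom_succ k
    have h' : ((k : ℝ) + 1) * (Nat.centralBinom (k + 1) : ℝ) = 2 * (2 * k + 1) * Nat.centralBinom k := by
      exact_mod_cast h
    set A := (Nat.centralBinom (k + 1) : ℝ)
    set B := (Nat.centralBinom k : ℝ)
    have hk : (0 : ℝ) ≤ k := Nat.cast_nonneg k
    have hB : 0 ≤ B ^ 2 := sq_nonneg B
    have e1 : ((k : ℝ) + 1) ^ 2 * A ^ 2 = (2 * (2 * k + 1)) ^ 2 * B ^ 2 := by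
      rw [← mul_pow, h', mul_pow]
    push_cast
    rw [pow_succ]
    have hpos : (0 : ℝ) < ((k : ℝ) + 1) ^ 2 := by positivity
    refine le_of_mul_le_mul_left ?_ hpos
    calc ((k : ℝ) + 1) ^ 2 * (A ^ 2 * (2 * (k + 1) + 1)) = (2 * (2 * k + 1)) ^ 2 * B ^ 2 * (2 * (k + 1) + 1) := by
          rw [← e1]; ring
      _ = (B ^ 2 * (2 * k + 1)) * (4 * (2 * k + 1) * (2 * k + 3)) := by ring
      _ ≤ (B ^ 2 * (2 * k + 1)) * (16 * (k + 1) ^ 2) := by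
          apply mul_le_mul_of_nonneg_left _ (by positivity)
          nlinarith
      _ ≤ 16 ^ k * (16 * (k + 1) ^ 2) := by gcongr
      _ = _ := by ring

lemma cb_lower (k : ℕ) : (16 : ℝ) ^ k ≤ (Nat.centralBinom k : ℝ) ^ 2 * (4 * (k + 1)) := by
  rcases k with _ | k
  · norm_num
  suffices h : (16 : ℝ) ^ (k + 1) ≤ (Nat.centralBinom (k + 1) : ℝ) ^ 2 * (4 * (k + 1)) by
    refine h.trans ?_
    push_cast
    gcongr
    linarith
  induction k with
  | zero => norm_num [show Nat.centralBinom 1 = 2 from rfl]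
  | succ k ih =>
    have h := Nat.succ_mul_centralBinom_succ (k + 1)
    have h' : ((k : ℝ) + 2) * (Nat.centralBinom (k + 2) : ℝ) = 2 * (2 * k + 3) * Nat.centralBinom (k + 1) := by
      have : ((k + 1 + 1 : ℕ) : ℝ) * (Nat.centralBinom (k + 2) : ℝ) = ((2 * (2 * (k + 1) + 1) : ℕ) : ℝ) * Nat.centralBinom (k + 1) := by
        exact_mod_cast h
      push_cast at this
      linarith
    rw [show k + 1 + 1 = k + 2 from rfl]
    set A := (Nat.centralBinom (k + 2) : ℝ)
    set B := (Nat.centralBinom (k + 1) : ℝ)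
    have hk : (0 : ℝ) ≤ k := Nat.cast_nonneg k
    have hB : 0 ≤ B ^ 2 := sq_nonneg B
    have e1 : ((k : ℝ) + 2) ^ 2 * A ^ 2 = (2 * (2 * k + 3)) ^ 2 * B ^ 2 := by
      rw [← mul_pow, h', mul_pow]
    push_cast
    have hpos : (0 : ℝ) < ((k : ℝ) + 2) ^ 2 := by positivity
    refine le_of_mul_le_mul_left ?_ hpos
    calc ((k : ℝ) + 2) ^ 2 * 16 ^ (k + 2) = 16 ^ (k + 1) * (16 * (k + 2) ^ 2) := by ring
      _ ≤ (B ^ 2 * (4 * (k + 1))) * (16 * (k + 2) ^ 2) := by gcongr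
      _ = (4 * B ^ 2 * (k + 2)) * (16 * (k + 1) * (k + 2)) := by ring
      _ ≤ (4 * B ^ 2 * (k + 2)) * ((2 * (2 * k + 3)) ^ 2) := by
          apply mul_le_mul_of_nonneg_left _ (by positivity)
          nlinarith
      _ = (((k : ℝ) + 2) ^ 2 * A ^ 2) * (4 * (k + 2)) := by rw [e1]; ring
      _ = _ := by ring

lemma cat_cast (k : ℕ) : (catalan k : ℝ) = (Nat.centralBinom k : ℝ) / (k + 1) := by
  have h := succ_mul_catalan_eq_centralBinom k
  have : ((k : ℝ) + 1) * catalan k = Nat.centralBinom k := by exact_mod_cast h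
  rw [← this]; field_simp

lemma cat_upper {L : ℕ} (hL : 1 ≤ L) : (catalan (L - 1) : ℝ) ≤ 4 ^ (L - 1) * g L := by
  obtain ⟨k, rfl⟩ : ∃ k, L = k + 1 := ⟨L - 1, by omega⟩
  simp only [Nat.add_sub_cancel]
  rw [cat_cast]
  unfold g
  push_cast
  have h := cb_upper k
  have hk : (0 : ℝ) ≤ k := Nat.cast_nonneg k
  have hs : (0 : ℝ) < Real.sqrt (k + 1) := Real.sqrt_pos.2 (by positivity)
  have key : (Nat.centralBinom k : ℝ) * Real.sqrt (k + 1) ≤ 4 ^ k := by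
    refine (sq_le_sq₀ (by positivity) (by positivity)).1 ?_
    rw [mul_pow, Real.sq_sqrt (by positivity), ← pow_mul, mul_comm k 2, pow_mul]
    norm_num
    refine le_trans ?_ h
    gcongr
    linarith
  rw [mul_one_div, div_le_div_iff₀ (by positivity) (by positivity)]
  nlinarith

lemma cat_lower {L : ℕ} (hL : 1 ≤ L) : 4 ^ (L - 1) / 2 * g L ≤ (catalan (L - 1) : ℝ) := by
  obtain ⟨k, rfl⟩ : ∃ k, L = k + 1 := ⟨L - 1, by omega⟩
  simp only [Nat.add_sub_cancel]
  rw [cat_cast]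
  unfold g
  push_cast
  have h := cb_lower k
  have hk : (0 : ℝ) ≤ k := Nat.cast_nonneg k
  have hs : (0 : ℝ) < Real.sqrt (k + 1) := Real.sqrt_pos.2 (by positivity)
  have key : (4 : ℝ) ^ k ≤ 2 * (Nat.centralBinom k : ℝ) * Real.sqrt (k + 1) := by
    refine (sq_le_sq₀ (by positivity) (by positivity)).1 ?_
    rw [mul_pow, Real.sq_sqrt (by positivity), ← pow_mul, mul_comm k 2, pow_mul]
    norm_num
    refine h.trans (le_of_eq ?_)
    ring
  rw [mul_one_div, div_div, div_le_div_iff₀ (by positivity) (by positivity)]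
  nlinarith

lemma sum_inner (s : ℕ) (hs : 1 ≤ s) (N : ℕ) :
    ∑ y ∈ Finset.range N, g (s + y) ≤ 4 * (1 / Real.sqrt s - 1 / Real.sqrt ((s + N : ℕ))) := by
  induction N with
  | zero => simp
  | succ N ih =>
    rw [Finset.sum_range_succ]
    have : g (s + N) ≤ 4 * (1 / Real.sqrt ((s + N : ℕ)) - 1 / Real.sqrt ((s + (N + 1) : ℕ))) := by
      set t := s + N with ht
      have ht1 : 1 ≤ t := by omega
      rw [show s + (N + 1) = t + 1 by omega]
      unfold g
      have ht' : (1 : ℝ) ≤ t := by exact_mod_cast ht1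
      push_cast
      have ha : 0 < Real.sqrt t := Real.sqrt_pos.2 (by positivity)
      have hb : 0 < Real.sqrt ((t : ℝ) + 1) := Real.sqrt_pos.2 (by positivity)
      have ha2 := Real.sq_sqrt (show (0 : ℝ) ≤ t by positivity)
      have hb2 := Real.sq_sqrt (show (0 : ℝ) ≤ (t : ℝ) + 1 by positivity)
      have hab : Real.sqrt t ≤ Real.sqrt ((t : ℝ) + 1) := Real.sqrt_le_sqrt (by linarith)
      set a := Real.sqrt t
      set b := Real.sqrt ((t : ℝ) + 1)
      rw [← ha2]
      have h1 : b - a = 1 / (a + b) := by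
        rw [eq_div_iff (by positivity)]; nlinarith
      have h2 : 1 / a - 1 / b = 1 / (a * b * (a + b)) := by
        have : 1 / a - 1 / b = (b - a) / (a * b) := by field_simp
        rw [this, h1, div_div, mul_comm]
      rw [h2, mul_one_div, div_le_div_iff₀ (by positivity) (by positivity)]
      have hb3 : b * (a + b) ≤ 4 * a ^ 2 := by nlinarith
      nlinarith [mul_le_mul_of_nonneg_left hb3 ha.le]
    linarith

lemma sum_outer (m : ℕ) : ∑ x ∈ Finset.range m, 1 / Real.sqrt ((x + 1 : ℕ)) ≤ 2 * Real.sqrt m := by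
  induction m with
  | zero => simp
  | succ m ih =>
    rw [Finset.sum_range_succ]
    have hb : 0 < Real.sqrt ((m + 1 : ℕ)) := Real.sqrt_pos.2 (by positivity)
    have ha : 0 ≤ Real.sqrt m := Real.sqrt_nonneg _
    have ha2 := Real.sq_sqrt (show (0 : ℝ) ≤ m by positivity)
    have hb2 := Real.sq_sqrt (show (0 : ℝ) ≤ ((m + 1 : ℕ) : ℝ) by positivity)
    set a := Real.sqrt m
    set b := Real.sqrt ((m + 1 : ℕ))
    have : 1 / b ≤ 2 * b - 2 * a := by
      rw [div_le_iff₀ hb]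
      push_cast at hb2
      nlinarith [sq_nonneg (a - b)]
    linarith

lemma dbl (m N : ℕ) : ∑ x ∈ Finset.range m, ∑ y ∈ Finset.range N, g (x + y + 1) ≤ 8 * Real.sqrt m := by
  calc ∑ x ∈ Finset.range m, ∑ y ∈ Finset.range N, g (x + y + 1)
      ≤ ∑ x ∈ Finset.range m, 4 * (1 / Real.sqrt ((x + 1 : ℕ))) := by
        refine Finset.sum_le_sum fun x _ => ?_
        have h := sum_inner (x + 1) (by omega) N
        have h2 : (0 : ℝ) ≤ 1 / Real.sqrt ((x + 1 + N : ℕ)) := by positivity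
        simp only [show ∀ y, x + y + 1 = x + 1 + y from fun y => by omega]
        linarith
    _ = 4 * ∑ x ∈ Finset.range m, 1 / Real.sqrt ((x + 1 : ℕ)) := by rw [Finset.mul_sum]
    _ ≤ _ := by have := sum_outer m; linarith

lemma dbl' {β : Type*} [DecidableEq β] (A B : Finset β) (x y : β → ℕ) (L : β → β → ℕ) (m N : ℕ)
    (hx : Set.InjOn x (A : Set β)) (hxm : ∀ a ∈ A, x a < m)
    (hy : Set.InjOn y (B : Set β)) (hyN : ∀ b ∈ B, y b < N)
    (hL : ∀ a ∈ A, ∀ b ∈ B, L a b = x a + y b + 1) :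
    ∑ a ∈ A, ∑ b ∈ B, g (L a b) ≤ 8 * Real.sqrt m := by
  refine le_trans ?_ (dbl m N)
  calc ∑ a ∈ A, ∑ b ∈ B, g (L a b) = ∑ a ∈ A, ∑ b ∈ B, g (x a + y b + 1) :=
        Finset.sum_congr rfl fun a ha => Finset.sum_congr rfl fun b hb => by rw [hL a ha b hb]
    _ = ∑ u ∈ A.image x, ∑ v ∈ B.image y, g (u + v + 1) := by
        rw [Finset.sum_image hx]
        exact Finset.sum_congr rfl fun a _ => by rw [Finset.sum_image hy]
    _ ≤ ∑ u ∈ A.image x, ∑ v ∈ Finset.range N, g (u + v + 1) := by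
        refine Finset.sum_le_sum fun u _ => ?_
        refine Finset.sum_le_sum_of_subset_of_nonneg ?_ fun _ _ _ => g_nonneg _
        intro v hv
        obtain ⟨b, hb, rfl⟩ := Finset.mem_image.1 hv
        exact Finset.mem_range.2 (hyN b hb)
    _ ≤ _ := by
        refine Finset.sum_le_sum_of_subset_of_nonneg ?_ fun _ _ _ =>
          Finset.sum_nonneg fun _ _ => g_nonneg _
        intro v hv
        obtain ⟨b, hb, rfl⟩ := Finset.mem_image.1 hv
        exact Finset.mem_range.2 (hxm b hb)

lemma sqrt_ge_of {m L : ℕ} {c d : ℝ} (hd : 0 ≤ d) (h : c * m ≤ L) (hc : d ^ 2 ≤ c) :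
    d * Real.sqrt m ≤ Real.sqrt L := by
  apply Real.le_sqrt_of_sq_le
  rw [mul_pow, Real.sq_sqrt (Nat.cast_nonneg m)]
  refine le_trans ?_ h
  gcongr

lemma g_big {m L : ℕ} (hm : 1 ≤ m) (h : m ≤ 2 * L) : g L ≤ 3 / (m * Real.sqrt m) := by
  have hm' : (1 : ℝ) ≤ m := by exact_mod_cast hm
  have h' : (m : ℝ) ≤ 2 * L := by exact_mod_cast h
  have h1 := sqrt_ge_of (m := m) (L := L) (c := 1 / 2) (d := 2 / 3) (by norm_num) (by linarith) (by norm_num)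
  have hs : 0 < Real.sqrt m := Real.sqrt_pos.2 (by positivity)
  have hL : (0 : ℝ) < L := by linarith
  have hsL : 0 < Real.sqrt L := Real.sqrt_pos.2 hL
  unfold g
  rw [div_le_div_iff₀ (by positivity) (by positivity)]
  have : (m : ℝ) / 2 * (2 / 3 * Real.sqrt m) ≤ L * Real.sqrt L := by
    gcongr
    linarith
  linarith

lemma g_small {m L : ℕ} (hL : 1 ≤ L) (h : L ≤ 8 * m) : 1 / (24 * (m * Real.sqrt m)) ≤ g L := by
  have hL' : (1 : ℝ) ≤ L := by exact_mod_cast hL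
  have h' : (L : ℝ) ≤ 8 * m := by exact_mod_cast h
  have hm : (0 : ℝ) < m := by linarith
  have hs : 0 < Real.sqrt m := Real.sqrt_pos.2 hm
  have hsL : 0 < Real.sqrt L := Real.sqrt_pos.2 (by linarith)
  have h1 : Real.sqrt L ≤ 3 * Real.sqrt m := by
    rw [Real.sqrt_le_left (by positivity), mul_pow, Real.sq_sqrt hm.le]
    linarith
  unfold g
  apply one_div_le_one_div_of_le (by positivity)
  calc (L : ℝ) * Real.sqrt L ≤ (8 * m) * (3 * Real.sqrt m) := by gcongr
    _ = _ := by ring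

lemma quad_pt {m a b c d : ℕ} (hm : 1 ≤ m) (hab : m ≤ a + b) (hbc : m ≤ b + c) (hcd : m ≤ c + d)
    (hda : m ≤ d + a) :
    g a * g b * g c * g d ≤ 9 / (m : ℝ) ^ 3 * (g a * g c + g b * g d) := by
  have hm' : (0 : ℝ) < m := by exact_mod_cast hm
  have hs : 0 < Real.sqrt m := Real.sqrt_pos.2 hm'
  have hs2 := Real.sq_sqrt hm'.le
  have key : ∀ x y : ℕ, m ≤ 2 * x → m ≤ 2 * y → g x * g y ≤ 9 / (m : ℝ) ^ 3 := by
    intro x y hx hy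
    calc g x * g y ≤ (3 / (m * Real.sqrt m)) * (3 / (m * Real.sqrt m)) :=
          mul_le_mul (g_big hm hx) (g_big hm hy) (g_nonneg _) (by positivity)
      _ = 9 / (m ^ 2 * (Real.sqrt m) ^ 2) := by field_simp; norm_num
      _ = _ := by rw [hs2]; ring
  have p1 := mul_nonneg (g_nonneg a) (g_nonneg c)
  have p2 := mul_nonneg (g_nonneg b) (g_nonneg d)
  have p3 : (0 : ℝ) ≤ 9 / (m : ℝ) ^ 3 := by positivity
  have hcase : (m ≤ 2 * a ∧ m ≤ 2 * c) ∨ (m ≤ 2 * b ∧ m ≤ 2 * d) := by omega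
  rcases hcase with ⟨h1, h2⟩ | ⟨h1, h2⟩
  · have := mul_le_mul_of_nonneg_right (key a c h1 h2) p2
    nlinarith [mul_nonneg p3 p1]
  · have := mul_le_mul_of_nonneg_right (key b d h1 h2) p1
    nlinarith [mul_nonneg p3 p2]

end analysis
end AssocExp

namespace AssocExp

section final
variable {n : ℕ}

lemma cnt_inn {x y : Fin (n + 2)} (h : x < y) :
    cnt (inn Finset.univ x y) ∅ = catalan (y.val - x.val - 1) := by
  apply cnt_catalan
  have : inn Finset.univ x y = Finset.Icc x y := by ext v; simp [mem_inn]
  rw [this, Fin.card_Icc]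
  simp only [Fin.lt_def] at h
  omega

lemma cnt_out {x y : Fin (n + 2)} (h : x < y) :
    cnt (out Finset.univ x y) ∅ = catalan (n + 2 - (y.val - x.val) - 1) := by
  apply cnt_catalan
  have : out Finset.univ x y = (Finset.Ioo x y)ᶜ := by
    ext v; simp only [mem_out, Finset.mem_univ, true_and, Finset.mem_compl, Finset.mem_Ioo]
    simp only [Fin.lt_def, Fin.le_def]; omega
  rw [this, Finset.card_compl, Fin.card_Ioo, Fintype.card_fin]
  simp only [Fin.lt_def] at h
  have := y.isLt
  omega

def blk (n a b : ℕ) : Finset (Fin (n + 2)) :=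
  Finset.univ.filter (fun x => a ≤ x.val ∧ x.val < b)

lemma mem_blk {a b : ℕ} {x : Fin (n + 2)} : x ∈ blk n a b ↔ a ≤ x.val ∧ x.val < b := by
  simp [blk]

lemma card_blk {a b : ℕ} (h : b ≤ n + 2) : (blk n a b).card = b - a := by
  rw [← Nat.card_Ico, ← Finset.card_map Fin.valEmbedding]
  congr 1
  ext v
  simp only [Finset.mem_map, mem_blk, Finset.mem_Ico, Fin.valEmbedding_apply]
  constructor
  · rintro ⟨x, hx, rfl⟩; exact hx
  · intro hv; exact ⟨⟨v, by omega⟩, hv, rfl⟩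

lemma lower_bound {m l : ℕ} (hm : 1 ≤ m) (hmn : 4 * m ≤ n + 2) (hnm : n + 2 ≤ 8 * m)
    (hl : m ≤ l) (hl' : l + m ≤ 3 * m) (p : Finset (Fin (n + 2) × Fin (n + 2)) → Prop)
    (hp : ∀ X, IsTri Finset.univ X → ∀ x y z : Fin (n + 2), x.val < m → l ≤ y.val → y.val < l + m →
      3 * m ≤ z.val → ({(x, z), (x, y), (y, z)} : Finset _) ⊆ X → p X) :
    (4 : ℝ) ^ (n - 1) / (48 ^ 3 * (m * Real.sqrt m)) ≤
      ({t : Triangulation n | p (toP t.val)}.ncard : ℝ) := by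
  classical
  rw [ncard_transfer]
  set D : Finset (Fin (n + 2) × Fin (n + 2) × Fin (n + 2)) :=
    blk n 0 m ×ˢ blk n l (l + m) ×ˢ blk n (3 * m) (4 * m) with hD
  have hmemD : ∀ d ∈ D, d.1.val < m ∧ l ≤ d.2.1.val ∧ d.2.1.val < l + m ∧ 3 * m ≤ d.2.2.val := by
    intro d hd
    simp only [hD, Finset.mem_product, mem_blk] at hd
    omega
  let A : Fin (n + 2) × Fin (n + 2) × Fin (n + 2) → Finset (Fin (n + 2) × Fin (n + 2)) :=
    fun d => {(d.1, d.2.2), (d.1, d.2.1), (d.2.1, d.2.2)}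
  have h1 : ∑ d ∈ D, cnt Finset.univ (A d) ≤ ((Tri Finset.univ).filter p).card := by
    unfold cnt
    rw [← Finset.card_biUnion]
    · apply Finset.card_le_card
      intro X hX
      simp only [Finset.mem_biUnion, Finset.mem_filter, mem_Tri] at hX ⊢
      obtain ⟨d, hd, hX, hA⟩ := hX
      have := hmemD d hd
      exact ⟨hX, hp X hX _ _ _ this.1 this.2.1 this.2.2.1 this.2.2.2 hA⟩
    · intro d hd d' hd' hne
      rw [Function.onFun, Finset.disjoint_left]
      intro X hX hX'
      apply hne
      simp only [Finset.mem_filter, mem_Tri, A, Finset.insert_subset_iff,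
        Finset.singleton_subset_iff] at hX hX'
      have hh := hmemD d hd
      have hh' := hmemD d' hd'
      obtain ⟨⟨-, hn, -⟩, a1, a2, a3⟩ := hX
      obtain ⟨-, b1, b2, b3⟩ := hX'
      have c1 := hn _ a2 _ b1
      have c2 := hn _ a1 _ b2
      have c3 := hn _ a2 _ b3
      have c4 := hn _ a3 _ b2
      have c5 := hn _ a1 _ b3
      have c6 := hn _ a3 _ b1
      obtain ⟨x, y, z⟩ := d
      obtain ⟨x', y', z'⟩ := d'
      unfold Cr at *
      simp only [Prod.mk.injEq, Fin.lt_def, Fin.ext_iff] at *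
      omega
  have hm' : (0 : ℝ) < m := by exact_mod_cast hm
  have hs : 0 < Real.sqrt m := Real.sqrt_pos.2 hm'
  have hs2 := Real.sq_sqrt hm'.le
  have h2 : ∀ d ∈ D, (4 : ℝ) ^ (n - 1) * (1 / (48 * (m * Real.sqrt m))) ^ 3 ≤
      (cnt Finset.univ (A d) : ℝ) := by
    intro d hd
    have hh := hmemD d hd
    obtain ⟨x, y, z⟩ := d
    simp only at hh
    have hxy : x < y := by simp only [Fin.lt_def]; omega
    have hyz : y < z := by simp only [Fin.lt_def]; omega
    simp only [A]
    rw [cnt_triangle (by simp) (by simp) (by simp) hxy hyz, cnt_inn hxy, cnt_inn hyz,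
      cnt_out (hxy.trans hyz)]
    simp only [Fin.lt_def] at hxy hyz
    have hz := z.isLt
    have key : ∀ L : ℕ, 1 ≤ L → L ≤ 8 * m →
        (4 : ℝ) ^ (L - 1) * (1 / (48 * (m * Real.sqrt m))) ≤ (catalan (L - 1) : ℝ) := by
      intro L hL hL'
      refine le_trans ?_ (cat_lower hL)
      have := g_small hL hL'
      calc (4 : ℝ) ^ (L - 1) * (1 / (48 * (m * Real.sqrt m)))
          = 4 ^ (L - 1) / 2 * (1 / (24 * (m * Real.sqrt m))) := by field_simp; norm_num
        _ ≤ _ := by gcongr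
    have k1 := key (y.val - x.val) (by omega) (by omega)
    have k2 := key (z.val - y.val) (by omega) (by omega)
    have k3 := key (n + 2 - (z.val - x.val)) (by omega) (by omega)
    push_cast
    refine le_trans (le_of_eq ?_) (mul_le_mul (mul_le_mul k1 k2 (by positivity) (by positivity)) k3
      (by positivity) (by positivity))
    rw [show n - 1 = (y.val - x.val - 1) + (z.val - y.val - 1) + (n + 2 - (z.val - x.val) - 1) by omega]
    rw [pow_add, pow_add]
    ring
  have hDc : D.card = m * (m * m) := by
    rw [hD, Finset.card_product, Finset.card_product, card_blk (by omega), card_blk (by omega),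
      card_blk (by omega)]
    rw [show l + m - l = m by omega, show 4 * m - 3 * m = m by omega, Nat.sub_zero]
  have h3 := Finset.card_nsmul_le_sum D _ _ h2
  rw [hDc, nsmul_eq_mul] at h3
  have h1' : (∑ d ∈ D, (cnt Finset.univ (A d) : ℝ)) ≤ (((Tri Finset.univ).filter p).card : ℝ) := by
    exact_mod_cast h1
  refine le_trans (le_of_eq ?_) (h3.trans h1')
  push_cast
  have : (Real.sqrt m) ^ 3 = m * Real.sqrt m := by rw [pow_succ, hs2]
  rw [div_pow, mul_pow, mul_pow, this]
  field_simp

lemma sum_bd (m : ℕ) (hm : 1 ≤ m) (hmn : 4 * m ≤ n + 2) :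
    ∑ i ∈ blk n 0 m, ∑ p ∈ blk n m (2 * m), ∑ j ∈ blk n (2 * m) (3 * m), ∑ q ∈ blk n (3 * m) (n + 2),
      g (p.val - i.val) * g (j.val - p.val) * g (q.val - j.val) * g (n + 2 - (q.val - i.val)) ≤
      1152 / (m : ℝ) ^ 2 := by
  have hm' : (0 : ℝ) < m := by exact_mod_cast hm
  have hs2 := Real.mul_self_sqrt hm'.le
  have hinj : ∀ (s : Finset (Fin (n + 2))) (f : Fin (n + 2) → ℕ),
      (∀ a ∈ s, ∀ b ∈ s, f a = f b → a.val = b.val) → Set.InjOn f (s : Set (Fin (n + 2))) :=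
    fun s f h a ha b hb hab => Fin.ext (h a ha b hb hab)
  have s1 : ∑ a ∈ blk n 0 m, ∑ b ∈ blk n m (2 * m), g (b.val - a.val) ≤
      8 * Real.sqrt m :=
    dbl' (blk n 0 m) (blk n m (2 * m)) (fun a => m - 1 - a.val) (fun b => b.val - m)
      (fun a b => b.val - a.val) m (n + 2)
      (hinj _ _ (by simp only [mem_blk]; intro a ha b hb h; omega))
      (by simp only [mem_blk]; intro a ha; omega)
      (hinj _ _ (by simp only [mem_blk]; intro a ha b hb h; omega))
      (by simp only [mem_blk]; intro a ha; omega)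
      (by simp only [mem_blk]; intro a ha b hb; omega)
  have s2 : ∑ a ∈ blk n (2 * m) (3 * m), ∑ b ∈ blk n (3 * m) (n + 2), g (b.val - a.val) ≤
      8 * Real.sqrt m :=
    dbl' (blk n (2 * m) (3 * m)) (blk n (3 * m) (n + 2)) (fun a => 3 * m - 1 - a.val) (fun b => b.val - 3 * m)
      (fun a b => b.val - a.val) m (n + 2)
      (hinj _ _ (by simp only [mem_blk]; intro a ha b hb h; omega))
      (by simp only [mem_blk]; intro a ha; omega)
      (hinj _ _ (by simp only [mem_blk]; intro a ha b hb h; omega))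
      (by simp only [mem_blk]; intro a ha; omega)
      (by simp only [mem_blk]; intro a ha b hb; omega)
  have s3 : ∑ a ∈ blk n m (2 * m), ∑ b ∈ blk n (2 * m) (3 * m), g (b.val - a.val) ≤
      8 * Real.sqrt m :=
    dbl' (blk n m (2 * m)) (blk n (2 * m) (3 * m)) (fun a => 2 * m - 1 - a.val) (fun b => b.val - 2 * m)
      (fun a b => b.val - a.val) m (n + 2)
      (hinj _ _ (by simp only [mem_blk]; intro a ha b hb h; omega))
      (by simp only [mem_blk]; intro a ha; omega)
      (hinj _ _ (by simp only [mem_blk]; intro a ha b hb h; omega))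
      (by simp only [mem_blk]; intro a ha; omega)
      (by simp only [mem_blk]; intro a ha b hb; omega)
  have s4 : ∑ a ∈ blk n 0 m, ∑ b ∈ blk n (3 * m) (n + 2), g (n + 2 - (b.val - a.val)) ≤
      8 * Real.sqrt m :=
    dbl' (blk n 0 m) (blk n (3 * m) (n + 2)) (fun a => a.val) (fun b => n + 1 - b.val)
      (fun a b => n + 2 - (b.val - a.val)) m (n + 2)
      (hinj _ _ (by simp only [mem_blk]; intro a ha b hb h; omega))
      (by simp only [mem_blk]; intro a ha; omega)
      (hinj _ _ (by simp only [mem_blk]; intro a ha b hb h; omega))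
      (by simp only [mem_blk]; intro a ha; omega)
      (by simp only [mem_blk]; intro a ha b hb; omega)
  have nn : ∀ (s t : Finset (Fin (n + 2))) (L : Fin (n + 2) → Fin (n + 2) → ℕ),
      0 ≤ ∑ a ∈ s, ∑ b ∈ t, g (L a b) :=
    fun s t L => Finset.sum_nonneg fun _ _ => Finset.sum_nonneg fun _ _ => g_nonneg _
  calc _ ≤ ∑ i ∈ blk n 0 m, ∑ p ∈ blk n m (2 * m), ∑ j ∈ blk n (2 * m) (3 * m),
        ∑ q ∈ blk n (3 * m) (n + 2), 9 / (m : ℝ) ^ 3 * (g (p.val - i.val) * g (q.val - j.val) +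
          g (j.val - p.val) * g (n + 2 - (q.val - i.val))) := by
        refine Finset.sum_le_sum fun i hi => Finset.sum_le_sum fun p hp =>
          Finset.sum_le_sum fun j hj => Finset.sum_le_sum fun q hq => ?_
        rw [mem_blk] at hi hp hj hq
        exact quad_pt hm (by omega) (by omega) (by omega) (by omega)
    _ = 9 / (m : ℝ) ^ 3 * ((∑ i ∈ blk n 0 m, ∑ p ∈ blk n m (2 * m), g (p.val - i.val)) *
          (∑ j ∈ blk n (2 * m) (3 * m), ∑ q ∈ blk n (3 * m) (n + 2), g (q.val - j.val)) +
          (∑ p ∈ blk n m (2 * m), ∑ j ∈ blk n (2 * m) (3 * m), g (j.val - p.val)) *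
          (∑ i ∈ blk n 0 m, ∑ q ∈ blk n (3 * m) (n + 2), g (n + 2 - (q.val - i.val)))) := by
        simp_rw [← Finset.mul_sum, Finset.sum_add_distrib, ← Finset.mul_sum, ← Finset.sum_mul,
          ← Finset.mul_sum]
    _ ≤ 9 / (m : ℝ) ^ 3 * ((8 * Real.sqrt m) * (8 * Real.sqrt m) +
          (8 * Real.sqrt m) * (8 * Real.sqrt m)) := by
        apply mul_le_mul_of_nonneg_left _ (by positivity)
        exact add_le_add (mul_le_mul s1 s2 (nn _ _ fun j q => q.val - j.val) (by positivity))
          (mul_le_mul s3 s4 (nn _ _ fun i q => n + 2 - (q.val - i.val)) (by positivity))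
    _ = 9 / (m : ℝ) ^ 3 * (128 * (Real.sqrt m * Real.sqrt m)) := by ring
    _ = _ := by rw [hs2]; field_simp; norm_num

/-- the cut -/
def cutP (n m : ℕ) (X : Finset (Fin (n + 2) × Fin (n + 2))) : Prop :=
  ∃ i j : Fin (n + 2), i.val < m ∧ 2 * m ≤ j.val ∧ j.val < 3 * m ∧ (i, j) ∈ X

lemma boundary_le {m : ℕ} (hm : 1 ≤ m) (hmn : 4 * m ≤ n + 2) :
    ((edgeBoundary (assocGraph n) {t : Triangulation n | cutP n m (toP t.val)}).ncard : ℝ) ≤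
      4 ^ (n - 2) * (1152 / (m : ℝ) ^ 2) := by
  classical
  let A : Fin (n + 2) → Fin (n + 2) → Fin (n + 2) → Fin (n + 2) →
      Finset (Fin (n + 2) × Fin (n + 2)) := fun i p j q => {(i, q), (i, j), (j, q), (i, p), (p, j)}
  let fl : Fin (n + 2) → Fin (n + 2) → Fin (n + 2) → Fin (n + 2) → Triangulation n → Triangulation n :=
    fun i p j q t => if h : ∃ v : Triangulation n, toP v.val = insert (p, q) ((toP t.val).erase (i, j))
      then h.choose else t
  let E : Fin (n + 2) → Fin (n + 2) → Fin (n + 2) → Fin (n + 2) → Finset (Sym2 (Triangulation n)) :=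
    fun i p j q => (Finset.univ.filter (fun t : Triangulation n => A i p j q ⊆ toP t.val)).image
      (fun t => s(t, fl i p j q t))
  let U : Finset (Sym2 (Triangulation n)) :=
    (blk n 0 m).biUnion fun i => (blk n m (2 * m)).biUnion fun p =>
      (blk n (2 * m) (3 * m)).biUnion fun j => (blk n (3 * m) (n + 2)).biUnion fun q => E i p j q
  have hsub : edgeBoundary (assocGraph n) {t : Triangulation n | cutP n m (toP t.val)} ⊆ (U : Set _) := by
    rintro e ⟨he, u, v, rfl, hu, hv⟩
    rw [SimpleGraph.mem_edgeSet] at he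
    have he' : (u.val \ v.val).card = 1 ∧ (v.val \ u.val).card = 1 := he
    obtain ⟨e1, h1⟩ := toP_diff u.2 he'.1
    obtain ⟨f1, h2⟩ := toP_diff v.2 he'.2
    obtain ⟨i, p, j, q, a1, a2, a3, a4, a5, a6, a7, a8⟩ :=
      flip_quad hm hmn (isTri_toP u.2) (isTri_toP v.2) h1 h2 hu hv
    simp only [U, Finset.coe_biUnion, Set.mem_iUnion, Finset.mem_coe, mem_blk, E, Finset.mem_image,
      Finset.mem_filter, Finset.mem_univ, true_and]
    refine ⟨i, ⟨Nat.zero_le _, a1⟩, p, ⟨a2, a3⟩, j, ⟨a4, a5⟩, q, ⟨a6, q.isLt⟩, u, a7, ?_⟩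
    have hex : ∃ v : Triangulation n, toP v.val = insert (p, q) ((toP u.val).erase (i, j)) := ⟨v, a8⟩
    have : fl i p j q u = v := by
      simp only [fl, dif_pos hex]
      exact Subtype.ext (toP_inj hex.choose.2 v.2 (hex.choose_spec.trans a8.symm))
    rw [this]
  have hU : (edgeBoundary (assocGraph n) {t : Triangulation n | cutP n m (toP t.val)}).ncard ≤ U.card := by
    rw [← Set.ncard_coe_finset]
    exact Set.ncard_le_ncard hsub (Finset.finite_toSet U)
  have hE : ∀ i p j q, (E i p j q).card ≤ cnt Finset.univ (A i p j q) := by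
    intro i p j q
    refine Finset.card_image_le.trans (le_of_eq ?_)
    unfold cnt
    have h := ncard_transfer (fun X => A i p j q ⊆ X)
    have h' : (Finset.univ.filter (fun t : Triangulation n => A i p j q ⊆ toP t.val)).card =
        {t : Triangulation n | A i p j q ⊆ toP t.val}.ncard := by
      rw [← Set.ncard_coe_finset]
      congr 1
      ext t; simp
    rw [h', h]
    congr 1
    ext X
    simp only [Finset.mem_filter]
  have hU2 : U.card ≤ ∑ i ∈ blk n 0 m, ∑ p ∈ blk n m (2 * m), ∑ j ∈ blk n (2 * m) (3 * m),
      ∑ q ∈ blk n (3 * m) (n + 2), cnt Finset.univ (A i p j q) := by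
    refine Finset.card_biUnion_le.trans (Finset.sum_le_sum fun i _ => ?_)
    refine Finset.card_biUnion_le.trans (Finset.sum_le_sum fun p _ => ?_)
    refine Finset.card_biUnion_le.trans (Finset.sum_le_sum fun j _ => ?_)
    exact Finset.card_biUnion_le.trans (Finset.sum_le_sum fun q _ => hE i p j q)
  have hfin : ((edgeBoundary (assocGraph n) {t : Triangulation n | cutP n m (toP t.val)}).ncard : ℝ) ≤
      ∑ i ∈ blk n 0 m, ∑ p ∈ blk n m (2 * m), ∑ j ∈ blk n (2 * m) (3 * m),
      ∑ q ∈ blk n (3 * m) (n + 2), (cnt Finset.univ (A i p j q) : ℝ) := by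
    exact_mod_cast hU.trans hU2
  refine hfin.trans ?_
  refine le_trans ?_ (mul_le_mul_of_nonneg_left (sum_bd m hm hmn) (by positivity))
  simp_rw [Finset.mul_sum]
  refine Finset.sum_le_sum fun i hi => Finset.sum_le_sum fun p hp =>
    Finset.sum_le_sum fun j hj => Finset.sum_le_sum fun q hq => ?_
  rw [mem_blk] at hi hp hj hq
  have hip : i < p := by simp only [Fin.lt_def]; omega
  have hpj : p < j := by simp only [Fin.lt_def]; omega
  have hjq : j < q := by simp only [Fin.lt_def]; omega
  simp only [A]
  rw [cnt_quad (by simp) (by simp) (by simp) (by simp) hip hpj hjq, cnt_inn hip, cnt_inn hpj,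
    cnt_inn hjq, cnt_out (hip.trans (hpj.trans hjq))]
  have k1 := cat_upper (L := p.val - i.val) (by omega)
  have k2 := cat_upper (L := j.val - p.val) (by omega)
  have k3 := cat_upper (L := q.val - j.val) (by omega)
  have k4 := cat_upper (L := n + 2 - (q.val - i.val)) (by omega)
  have q1 := g_nonneg (p.val - i.val)
  have q2 := g_nonneg (j.val - p.val)
  have q3 := g_nonneg (q.val - j.val)
  have q4 := g_nonneg (n + 2 - (q.val - i.val))
  push_cast
  refine (mul_le_mul (mul_le_mul (mul_le_mul k1 k2 (by positivity) (by positivity)) k3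
    (by positivity) (by positivity)) k4 (by positivity) (by positivity)).trans (le_of_eq ?_)
  rw [show n - 2 = (p.val - i.val - 1) + (j.val - p.val - 1) + (q.val - j.val - 1) +
    (n + 2 - (q.val - i.val) - 1) by omega]
  rw [pow_add, pow_add, pow_add]
  ring

lemma edgeBoundary_compl {V : Type*} (G : SimpleGraph V) (S : Set V) :
    edgeBoundary G Sᶜ = edgeBoundary G S := by
  ext e
  constructor
  · rintro ⟨he, u, v, rfl, hu, hv⟩
    exact ⟨he, v, u, Sym2.eq_swap, by simpa using hv, hu⟩
  · rintro ⟨he, u, v, rfl, hu, hv⟩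
    exact ⟨he, v, u, Sym2.eq_swap, hv, by simpa using hu⟩

lemma final_calc {m B s : ℝ} {n : ℕ} (hn : 2 ≤ n) (hm : 0 < m) (hnm : (n : ℝ) ≤ 8 * m)
    (hB : B ≤ 4 ^ (n - 2) * (1152 / m ^ 2))
    (hs : (4 : ℝ) ^ (n - 1) / (48 ^ 3 * (m * Real.sqrt m)) ≤ s) :
    B ≤ (3 * 288 * 48 ^ 3) * s / Real.sqrt n := by
  have hn' : (0 : ℝ) < n := by exact_mod_cast (by omega : 0 < n)
  have hsn : 0 < Real.sqrt n := Real.sqrt_pos.2 hn'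
  have hsm : 0 < Real.sqrt m := Real.sqrt_pos.2 hm
  have h1 : Real.sqrt n ≤ 3 * Real.sqrt m := by
    rw [Real.sqrt_le_left (by positivity), mul_pow, Real.sq_sqrt hm.le]
    linarith
  have hs2 := Real.mul_self_sqrt hm.le
  rw [le_div_iff₀ hsn]
  calc B * Real.sqrt n ≤ (4 ^ (n - 2) * (1152 / m ^ 2)) * Real.sqrt n := by gcongr
    _ ≤ (4 ^ (n - 2) * (1152 / m ^ 2)) * (3 * Real.sqrt m) := by gcongr
    _ = (3 * 288 * 48 ^ 3) * ((4 : ℝ) ^ (n - 1) / (48 ^ 3 * (m * Real.sqrt m))) := by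
        rw [show n - 1 = (n - 2) + 1 by omega, pow_succ (4 : ℝ) (n - 2)]
        have : m ^ 2 = m * (Real.sqrt m * Real.sqrt m) := by rw [hs2]; ring
        rw [this]
        field_simp
        norm_num
    _ ≤ _ := by gcongr

end final
end AssocExp

open AssocExp
theorem assocGraph_expansion_upper_bound :
    ∃ C : ℝ, 0 < C ∧ ∀ n : ℕ, 2 ≤ n → ∃ S : Set (Triangulation n),
      S.Nonempty ∧ 2 * S.ncard ≤ Nat.card (Triangulation n) ∧
      ((edgeBoundary (assocGraph n) S).ncard : ℝ) ≤ C * (S.ncard : ℝ) / Real.sqrt n := by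
  refine ⟨3 * 288 * 48 ^ 3, by norm_num, ?_⟩
  intro n hn
  set m := (n + 2) / 4 with hmdef
  have hm : 1 ≤ m := by omega
  have hmn : 4 * m ≤ n + 2 := by omega
  have hnm : n + 2 ≤ 8 * m := by omega
  have hm' : (0 : ℝ) < m := by exact_mod_cast hm
  have hnm' : (n : ℝ) ≤ 8 * m := by exact_mod_cast (by omega : n ≤ 8 * m)
  have hsm : 0 < Real.sqrt m := Real.sqrt_pos.2 hm'
  have hB := boundary_le (n := n) hm hmn
  have l1 := lower_bound (n := n) (l := 2 * m) hm hmn hnm (by omega) (by omega) (cutP n m) (by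
    intro X _ x y z h1 h2 h3 _ h5
    exact ⟨x, y, h1, h2, by omega, h5 (by simp)⟩)
  have l2 := lower_bound (n := n) (l := m) hm hmn hnm (by omega) (by omega) (fun X => ¬ cutP n m X) (by
    rintro X hX x y z h1 h2 h3 h4 h5 ⟨i, j, b1, b2, b3, b4⟩
    refine hX.2.1 _ b4 (y, z) (h5 (by simp)) (Or.inl ?_)
    simp only [Fin.lt_def]
    omega)
  set S : Set (Triangulation n) := {t | cutP n m (toP t.val)} with hS
  have hSc : {t : Triangulation n | ¬ cutP n m (toP t.val)} = Sᶜ := rfl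
  rw [hSc] at l2
  have hadd := Set.ncard_add_ncard_compl S
  have hpos : (0 : ℝ) < 4 ^ (n - 1) / (48 ^ 3 * (m * Real.sqrt m)) := by positivity
  rcases le_total S.ncard Sᶜ.ncard with h | h
  · refine ⟨S, ?_, by omega, final_calc hn hm' hnm' hB l1⟩
    rw [← Set.ncard_pos]
    exact_mod_cast hpos.trans_le l1
  · refine ⟨Sᶜ, ?_, by omega, ?_⟩
    · rw [← Set.ncard_pos]
      exact_mod_cast hpos.trans_le l2
    · rw [edgeBoundary_compl]
      exact final_calc hn hm' hnm' hB l2
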